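/- The partial gradient of H with respect to the log-illumination l, namely ∇_l H(u,c,l) = ( 2 Σ_{k=1}^K uₖ(j)(l(j) + cₖ − f(j)) )_{j∈G} + 2γ ∇*∇ l, is globally Lipschitz in l on the simplex-constrained label assignments: for every u : G → ℝ^K with u(j) ∈ Δ_K for all j, every c ∈ ℝ^K and all l¹, l² : G → ℝ, ‖∇_l H(u,c,l¹) − ∇_l H(u,c,l²)‖₂ ≤ (2 + 8dγ) ‖l¹ − l²‖₂. -/

import Mathlib

open Finset

noncomputable section

/-- Discrete gradient with forward differences and mirror boundary conditions. -/
def grad {d : ℕ} (n : Fin d → ℕ) (F : (∀ i, Fin (n i)) → ℝ)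
    (j : ∀ i, Fin (n i)) (i : Fin d) : ℝ :=
  if h : (j i : ℕ) + 1 < n i then F (Function.update j i ⟨(j i : ℕ) + 1, h⟩) - F j else 0

/-!
Write `A` for the discrete gradient between Euclidean spaces. In each of the `d` directions, `A`
is the difference of a shift that is injective away from the far face and the identity, so
`(a - b)² ≤ 2 (a² + b²)` gives `‖A‖² ≤ 4d`. Since `∇*∇ = A* A`, its operator norm is `‖A‖² ≤ 4d`.
The difference of two values of `∇_l H` is `2 (∑ₖ uₖ) (l₁ - l₂) + 2γ ∇*∇ (l₁ - l₂)`, and the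
triangle inequality finishes the proof.
-/

open WithLp (toLp)

theorem sum_sq_comp_sub_le {ι R : Type*} [Fintype ι] [CommRing R] [LinearOrder R]
    [IsStrictOrderedRing R] {s : Finset ι} {σ : ι → ι} (hσ : Set.InjOn σ s) (F : ι → R) :
    ∑ j ∈ s, (F (σ j) - F j) ^ 2 ≤ 4 * ∑ j, F j ^ 2 := by
  classical
  have sum_shifted_le : ∑ j ∈ s, F (σ j) ^ 2 ≤ ∑ j, F j ^ 2 := by
    rw [← sum_image (f := fun j ↦ F j ^ 2) hσ]
    exact sum_le_univ_sum_of_nonneg fun j ↦ sq_nonneg (F j)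
  have sum_self_le : ∑ j ∈ s, F j ^ 2 ≤ ∑ j, F j ^ 2 :=
    sum_le_univ_sum_of_nonneg fun j ↦ sq_nonneg (F j)
  calc ∑ j ∈ s, (F (σ j) - F j) ^ 2
      ≤ ∑ j ∈ s, 2 * (F (σ j) ^ 2 + F j ^ 2) :=
        sum_le_sum fun j _ ↦ by simpa [sub_eq_add_neg] using add_sq_le (a := F (σ j)) (b := -F j)
    _ = 2 * (∑ j ∈ s, F (σ j) ^ 2 + ∑ j ∈ s, F j ^ 2) := by rw [← mul_sum, sum_add_distrib]
    _ ≤ 4 * ∑ j, F j ^ 2 := by linarith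

section Euclidean

variable {ι : Type*} [Fintype ι]

theorem norm_toLp_two_eq_sqrt (x : ι → ℝ) : ‖toLp 2 x‖ = √(∑ j, x j ^ 2) := by
  simp [EuclideanSpace.norm_eq]

theorem norm_toLp_two_mul_le (a x : ι → ℝ) : ‖toLp 2 (a * x)‖ ≤ ‖a‖ * ‖toLp 2 x‖ := by
  rw [← sq_le_sq₀ (by positivity) (by positivity), mul_pow, EuclideanSpace.real_norm_sq_eq,
    EuclideanSpace.real_norm_sq_eq, mul_sum]
  refine sum_le_sum fun j _ ↦ ?_
  rw [PiLp.toLp_apply, Pi.mul_apply, mul_pow, ← sq_abs (a j)]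
  gcongr
  exact norm_le_pi_norm a j

end Euclidean

section Gradient

variable {d : ℕ} (n : Fin d → ℕ)

/-- The neighbour `j + eᵢ` of the pixel `j`. On the far face `jᵢ = nᵢ - 1` it is `j` itself, so
that forward differences along it obey the mirror boundary condition. -/
def pixelShift (i : Fin d) (j : ∀ i, Fin (n i)) : ∀ i, Fin (n i) :=
  if h : (j i : ℕ) + 1 < n i then Function.update j i ⟨(j i : ℕ) + 1, h⟩ else j

theorem pixelShift_injOn (i : Fin d) :
    Set.InjOn (pixelShift n i) {j | (j i : ℕ) + 1 < n i} := by
  intro a ha b hb hab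
  simp only [pixelShift, dif_pos ha.out, dif_pos hb.out] at hab
  funext k
  have hk := congrFun hab k
  obtain rfl | hki := eq_or_ne k i
  · simpa [Fin.ext_iff] using hk
  · simpa [hki] using hk

theorem grad_eq_pixelShift_sub (F : (∀ i, Fin (n i)) → ℝ) (j : ∀ i, Fin (n i)) (i : Fin d) :
    grad n F j i = F (pixelShift n i j) - F j := by
  unfold grad pixelShift
  split_ifs <;> simp

theorem sum_grad_sq_le (F : (∀ i, Fin (n i)) → ℝ) (i : Fin d) :
    ∑ j, grad n F j i ^ 2 ≤ 4 * ∑ j, F j ^ 2 := by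
  have hinj : Set.InjOn (pixelShift n i)
      ({j | (j i : ℕ) + 1 < n i} : Finset (∀ i, Fin (n i))) := by
    simpa using pixelShift_injOn n i
  have grad_far_face (j : ∀ i, Fin (n i)) (hj : grad n F j i ^ 2 ≠ 0) : (j i : ℕ) + 1 < n i := by
    contrapose! hj
    simp [grad, hj.not_gt]
  rw [← sum_filter_of_ne fun j _ ↦ grad_far_face j]
  simpa only [grad_eq_pixelShift_sub] using sum_sq_comp_sub_le hinj F

/-- The discrete gradient `∇` as an operator between Euclidean spaces; a vector field on the grid
is encoded by its family of components, indexed by pairs of a pixel and a direction. -/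
def gradCLM : EuclideanSpace ℝ (∀ i, Fin (n i)) →L[ℝ]
    EuclideanSpace ℝ ((∀ i, Fin (n i)) × Fin d) :=
  LinearMap.toContinuousLinearMap
    { toFun := fun F ↦ toLp 2 fun p ↦ grad n F p.1 p.2
      map_add' := fun F G ↦ by
        ext p
        simp only [grad_eq_pixelShift_sub, PiLp.add_apply]
        ring
      map_smul' := fun r F ↦ by
        ext p
        simp [grad_eq_pixelShift_sub, mul_sub] }

@[simp]
theorem gradCLM_apply (F : EuclideanSpace ℝ (∀ i, Fin (n i))) (p : (∀ i, Fin (n i)) × Fin d) :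
    gradCLM n F p = grad n F p.1 p.2 :=
  rfl

theorem norm_gradCLM_le : ‖gradCLM n‖ ≤ √(4 * d) := by
  refine (gradCLM n).opNorm_le_bound (Real.sqrt_nonneg _) fun F ↦ ?_
  rw [← sq_le_sq₀ (by positivity) (by positivity), mul_pow, Real.sq_sqrt (by positivity)]
  calc ‖gradCLM n F‖ ^ 2
      = ∑ i, ∑ j, grad n F j i ^ 2 := by
        simp only [EuclideanSpace.real_norm_sq_eq, gradCLM_apply, Fintype.sum_prod_type_right]
    _ ≤ ∑ _i : Fin d, 4 * ∑ j, F j ^ 2 := sum_le_sum fun i _ ↦ sum_grad_sq_le n F i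
    _ = 4 * d * ‖F‖ ^ 2 := by
        rw [sum_const, card_univ, Fintype.card_fin, nsmul_eq_mul, EuclideanSpace.real_norm_sq_eq]
        ring

/-- The discrete Laplacian `∇*∇`, with the sign convention that makes it positive semidefinite. -/
def gridLaplacian : EuclideanSpace ℝ (∀ i, Fin (n i)) →L[ℝ] EuclideanSpace ℝ (∀ i, Fin (n i)) :=
  (gradCLM n).adjoint ∘L gradCLM n

theorem norm_gridLaplacian_le : ‖gridLaplacian n‖ ≤ 4 * d := by
  rw [gridLaplacian, ContinuousLinearMap.norm_adjoint_comp_self,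
    ← Real.mul_self_sqrt (show (0 : ℝ) ≤ 4 * d by positivity)]
  gcongr <;> exact norm_gradCLM_le n

variable {n} in
theorem toLp_eq_gridLaplacian_of_sum_grad_mul_grad {F L : (∀ i, Fin (n i)) → ℝ}
    (hL : ∀ G, ∑ j, ∑ i, grad n F j i * grad n G j i = ∑ j, L j * G j) :
    toLp 2 L = gridLaplacian n (toLp 2 F) := by
  refine ext_inner_right ℝ fun G ↦ ?_
  rw [gridLaplacian, ContinuousLinearMap.comp_apply, ContinuousLinearMap.adjoint_inner_left]
  simpa [PiLp.inner_apply, Fintype.sum_prod_type, mul_comm] using (hL G).symm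

end Gradient

theorem sum_weight_mul_residual_sub {κ : Type*} [Fintype κ] {R : Type*} [CommRing R]
    (w c : κ → R) (x y z : R) :
    ∑ k, w k * (x + c k - z) - ∑ k, w k * (y + c k - z) = (∑ k, w k) * (x - y) := by
  rw [← sum_sub_distrib, sum_mul]
  exact sum_congr rfl fun k _ ↦ by ring

theorem gradl_lipschitz_general {d : ℕ} {κ : Type*} [Fintype κ] (n : Fin d → ℕ)
    (f : (∀ i, Fin (n i)) → ℝ) (γ : ℝ)
    (Lap : ((∀ i, Fin (n i)) → ℝ) → ((∀ i, Fin (n i)) → ℝ))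
    (hLap : ∀ F G : (∀ i, Fin (n i)) → ℝ,
      ∑ j, ∑ i, grad n F j i * grad n G j i = ∑ j, Lap F j * G j)
    (u : (∀ i, Fin (n i)) → κ → ℝ) (c : κ → ℝ) (l₁ l₂ : (∀ i, Fin (n i)) → ℝ) :
    √(∑ j, (((2 * ∑ k, u j k * (l₁ j + c k - f j)) + 2 * γ * Lap l₁ j)
        - ((2 * ∑ k, u j k * (l₂ j + c k - f j)) + 2 * γ * Lap l₂ j)) ^ 2)
      ≤ (2 * ‖fun j ↦ ∑ k, u j k‖ + 8 * d * |γ|) * √(∑ j, (l₁ j - l₂ j) ^ 2) := by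
  set w := l₁ - l₂
  set σ := fun j ↦ ∑ k, u j k
  have lap_sub : toLp 2 (Lap l₁ - Lap l₂) = gridLaplacian n (toLp 2 w) := by
    simp only [w, WithLp.toLp_sub, map_sub,
      toLp_eq_gridLaplacian_of_sum_grad_mul_grad (hLap _)]
  have gradient_sub (j : ∀ i, Fin (n i)) :
      (2 * ∑ k, u j k * (l₁ j + c k - f j)) + 2 * γ * Lap l₁ j
        - ((2 * ∑ k, u j k * (l₂ j + c k - f j)) + 2 * γ * Lap l₂ j)
      = ((2 : ℝ) • (σ * w) + (2 * γ) • (Lap l₁ - Lap l₂)) j := by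
    simp only [Pi.add_apply, Pi.smul_apply, Pi.mul_apply, Pi.sub_apply, smul_eq_mul, σ, w]
    linear_combination 2 * sum_weight_mul_residual_sub (u j) c (l₁ j) (l₂ j) (f j)
  simp only [gradient_sub, ← Pi.sub_apply l₁ l₂, ← norm_toLp_two_eq_sqrt]
  calc ‖toLp 2 ((2 : ℝ) • (σ * w) + (2 * γ) • (Lap l₁ - Lap l₂))‖
      ≤ 2 * ‖toLp 2 (σ * w)‖ + 2 * |γ| * ‖gridLaplacian n (toLp 2 w)‖ := by
        rw [WithLp.toLp_add, WithLp.toLp_smul, WithLp.toLp_smul, lap_sub]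
        exact (norm_add_le _ _).trans_eq (by simp [norm_smul])
    _ ≤ 2 * (‖σ‖ * ‖toLp 2 w‖) + 2 * |γ| * (4 * d * ‖toLp 2 w‖) := by
        gcongr
        · exact norm_toLp_two_mul_le σ w
        · exact (gridLaplacian n).le_of_opNorm_le (norm_gridLaplacian_le n) _
    _ = (2 * ‖σ‖ + 8 * d * |γ|) * ‖toLp 2 w‖ := by ring

/-- The partial gradient
`∇_l H(u,c,l) = (2 Σ_k u_k(j)(l(j) + c_k − f(j)))_j + 2γ ∇*∇ l` is globally Lipschitz in
`l` with constant `2 + 8dγ` for simplex-valued `u`. Here `Lap = ∇*∇` is the discrete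
Laplacian, characterized as the composition of `∇` with its adjoint with respect to the
Euclidean inner products. -/
theorem gradl_lipschitz (d K : ℕ) (n : Fin d → ℕ)
    (f : (∀ i, Fin (n i)) → ℝ) (γ : ℝ) (hγ : 0 ≤ γ)
    (Lap : ((∀ i, Fin (n i)) → ℝ) → ((∀ i, Fin (n i)) → ℝ))
    (hLap : ∀ (F G : (∀ i, Fin (n i)) → ℝ),
      ∑ j, ∑ i, grad n F j i * grad n G j i = ∑ j, Lap F j * G j)
    (u : (∀ i, Fin (n i)) → Fin K → ℝ)
    (hu : ∀ j, (∀ k, 0 ≤ u j k) ∧ ∑ k, u j k = 1)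
    (c : Fin K → ℝ) (l₁ l₂ : (∀ i, Fin (n i)) → ℝ) :
    Real.sqrt (∑ j, (((2 * ∑ k, u j k * (l₁ j + c k - f j)) + 2 * γ * Lap l₁ j)
        - ((2 * ∑ k, u j k * (l₂ j + c k - f j)) + 2 * γ * Lap l₂ j)) ^ 2)
      ≤ (2 + 8 * (d : ℝ) * γ) * Real.sqrt (∑ j, (l₁ j - l₂ j) ^ 2) := by
  have hσ : ‖fun j ↦ ∑ k, u j k‖ ≤ 1 := by simpa [(hu _).2] using pi_norm_const_le (1 : ℝ)
  exact (gradl_lipschitz_general n f γ Lap hLap u c l₁ l₂).trans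
    (by rw [abs_of_nonneg hγ]; gcongr; linarith)
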